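/- Let d ≥ 1, let Q ⊆ ℝ^d be a dyadic cube, and let f ∈ L¹(Q) be nonnegative with var_{interior(Q)} f < ∞. Define M_Q f(x) = sup { f_P : P a dyadic cube with x ∈ P ⊆ Q }. Then there is a constant C depending only on d such that ∫_Q M_Q f ≤ C · ( ∫_Q f + |Q|^{1/d} · var_{interior(Q)} f ). -/

import Mathlib

open MeasureTheory Metric Set Filter
open scoped ENNReal Topology

noncomputable section

/-- `ℝ^d` as Euclidean space. -/
abbrev Ed (d : ℕ) := EuclideanSpace ℝ (Fin d)

/-- A dyadic cube `∏_i [2^n m_i, 2^n (m_i + 1))`. -/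
def IsDyadicCube {d : ℕ} (Q : Set (Ed d)) : Prop :=
  ∃ (n : ℤ) (m : Fin d → ℤ),
    Q = {x : Ed d | ∀ i, x i ∈ Set.Ico ((2:ℝ)^n * m i) ((2:ℝ)^n * (m i + 1))}

/-- Divergence of a vector field `φ : ℝ^d → ℝ^d`. -/
def divergence {d : ℕ} (φ : Ed d → Ed d) (x : Ed d) : ℝ :=
  ∑ i, fderiv ℝ φ x (EuclideanSpace.single i 1) i

/-- The variation of `f` in `Ω`. -/
def var {d : ℕ} (Ω : Set (Ed d)) (f : Ed d → ℝ) : ℝ≥0∞ :=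
  ⨆ φ ∈ {φ : Ed d → Ed d | ContDiff ℝ 1 φ ∧ HasCompactSupport φ ∧ tsupport φ ⊆ Ω ∧
      ∀ x, ‖φ x‖ ≤ 1},
    ENNReal.ofReal (∫ x in Ω, f x * divergence φ x)

/-- The dyadic maximal function restricted to subcubes of `Q`:
`M_Q f(x) = sup { ⨍_P f : P dyadic cube, x ∈ P ⊆ Q }`. -/
def dyadicMaxFunIn {d : ℕ} (Q : Set (Ed d)) (f : Ed d → ℝ) (x : Ed d) : ℝ :=
  sSup {y : ℝ | ∃ P : Set (Ed d), IsDyadicCube P ∧ x ∈ P ∧ P ⊆ Q ∧ y = ⨍ z in P, f z}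

/-! ### Averaging a bump function along a segment -/

lemma contDiff_integral_translate {E : Type*} [NormedAddCommGroup E] [NormedSpace ℝ E]
    {ψ : E → ℝ} (hψ : ContDiff ℝ 1 ψ) (hc : HasCompactSupport ψ) (v : E) :
    ContDiff ℝ 1 (fun x ↦ ∫ t in (0:ℝ)..1, ψ (x - t • v)) ∧
      ∀ x, fderiv ℝ (fun x ↦ ∫ t in (0:ℝ)..1, ψ (x - t • v)) x v = ψ x - ψ (x - v) := by
  have hψ' : Continuous (fderiv ℝ ψ) := hψ.continuous_fderiv one_ne_zero
  have hd : Differentiable ℝ ψ := hψ.differentiable one_ne_zero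
  obtain ⟨B, hB⟩ : ∃ B, ∀ x, ‖fderiv ℝ ψ x‖ ≤ B :=
    hψ'.bounded_above_of_compact_support (hc.fderiv (𝕜 := ℝ))
  have key : ∀ x, HasFDerivAt (fun x ↦ ∫ t in (0:ℝ)..1, ψ (x - t • v))
      (∫ t in (0:ℝ)..1, fderiv ℝ ψ (x - t • v)) x := by
    intro x
    refine intervalIntegral.hasFDerivAt_integral_of_dominated_of_fderiv_le
      (F' := fun x t ↦ fderiv ℝ ψ (x - t • v)) (bound := fun _ ↦ B) univ_mem ?_ ?_ ?_ ?_ ?_ ?_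
    · exact Eventually.of_forall fun y ↦ Continuous.aestronglyMeasurable
        (hψ.continuous.comp (by fun_prop))
    · exact Continuous.intervalIntegrable (hψ.continuous.comp (by fun_prop)) _ _
    · exact Continuous.aestronglyMeasurable (hψ'.comp (by fun_prop))
    · exact Eventually.of_forall fun t _ y _ ↦ hB _
    · exact intervalIntegrable_const
    · refine Eventually.of_forall fun t _ y _ ↦ ?_
      exact (hd (y - t • v)).hasFDerivAt.comp y ((hasFDerivAt_id y).sub_const (t • v))
  have hfd : fderiv ℝ (fun x ↦ ∫ t in (0:ℝ)..1, ψ (x - t • v)) =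
      fun x ↦ ∫ t in (0:ℝ)..1, fderiv ℝ ψ (x - t • v) := funext fun x ↦ (key x).fderiv
  refine ⟨contDiff_one_iff_fderiv.2 ⟨fun x ↦ (key x).differentiableAt, ?_⟩, fun x ↦ ?_⟩
  · rw [hfd]
    exact intervalIntegral.continuous_parametric_intervalIntegral_of_continuous'
      (f := fun x t ↦ fderiv ℝ ψ (x - t • v)) (hψ'.comp (by fun_prop)) _ _
  · have hcv : Continuous fun t : ℝ ↦ fderiv ℝ ψ (x - t • v) := hψ'.comp (by fun_prop)
    rw [(key x).fderiv, ContinuousLinearMap.intervalIntegral_apply (hcv.intervalIntegrable _ _)]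
    have hder : ∀ t : ℝ, HasDerivAt (fun t : ℝ ↦ -ψ (x - t • v)) (fderiv ℝ ψ (x - t • v) v) t := by
      intro t
      have h1 : HasDerivAt (fun t : ℝ ↦ x - t • v) (-v) t := by
        simpa using ((hasDerivAt_id t).smul_const v).const_sub x
      exact ((hd (x - t • v)).hasFDerivAt.comp_hasDerivAt t h1).neg.congr_deriv (by simp)
    rw [intervalIntegral.integral_eq_sub_of_hasDerivAt (fun t _ ↦ hder t)
      ((hcv.clm_apply continuous_const).intervalIntegrable _ _)]
    simp
    ring

lemma divergence_smul_const {d : ℕ} {w : Ed d → ℝ} (hw : Differentiable ℝ w) (u x : Ed d) :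
    divergence (fun y ↦ w y • u) x = fderiv ℝ w x u := by
  have h1 : fderiv ℝ (fun y ↦ w y • u) x = (fderiv ℝ w x).smulRight u :=
    ((hw x).hasFDerivAt.smul_const u).fderiv
  have h2 : u = ∑ i, u i • EuclideanSpace.single i (1:ℝ) := by
    ext j; simp [Finset.sum_apply, Pi.single_apply]
  unfold divergence
  conv_rhs => rw [h2]
  simp [h1, mul_comm]

lemma divergence_add {d : ℕ} {φ ψ : Ed d → Ed d} (hφ : Differentiable ℝ φ)
    (hψ : Differentiable ℝ ψ) (x : Ed d) :
    divergence (fun y ↦ φ y + ψ y) x = divergence φ x + divergence ψ x := by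
  simp [divergence, fderiv_fun_add (hφ x) (hψ x), Finset.sum_add_distrib]

lemma exists_contDiff_bump {E : Type*} [NormedAddCommGroup E] [NormedSpace ℝ E]
    [FiniteDimensional ℝ E] {K U : Set E} (hK : IsCompact K) (hU : IsOpen U) (hKU : K ⊆ U) :
    ∃ ψ : E → ℝ, ContDiff ℝ 1 ψ ∧ HasCompactSupport ψ ∧ tsupport ψ ⊆ U ∧
      (∀ x, 0 ≤ ψ x) ∧ (∀ x, ψ x ≤ 1) ∧ ∀ x ∈ K, ψ x = 1 := by
  obtain ⟨L, hL, hKL, hLU⟩ := exists_compact_between hK hU hKU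
  obtain ⟨ψ, hψ, hr, hs, h1⟩ := exists_contMDiff_support_eq_eq_one_iff (modelWithCornersSelf ℝ E)
    (n := 1) isOpen_interior hK.isClosed hKL
  have hsub : tsupport ψ ⊆ L := by
    rw [tsupport, hs]; exact closure_minimal interior_subset hL.isClosed
  refine ⟨ψ, hψ.contDiff, hL.of_isClosed_subset (isClosed_tsupport _) hsub, hsub.trans hLU,
    fun x ↦ (hr (mem_range_self x)).1, fun x ↦ (hr (mem_range_self x)).2, fun x hx ↦ (h1 x).1 hx⟩

/-! ### Superadditivity of the variation -/

section Variation

variable {d : ℕ} {U V Ω : Set (Ed d)} {f : Ed d → ℝ} {φ : Ed d → Ed d}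

lemma ofReal_integral_le_var (h1 : ContDiff ℝ 1 φ) (h2 : HasCompactSupport φ)
    (h3 : tsupport φ ⊆ Ω) (h4 : ∀ x, ‖φ x‖ ≤ 1) :
    ENNReal.ofReal (∫ x in Ω, f x * divergence φ x) ≤ var Ω f :=
  le_iSup₂ (f := fun φ (_ : φ ∈ {φ : Ed d → Ed d | ContDiff ℝ 1 φ ∧ HasCompactSupport φ ∧
    tsupport φ ⊆ Ω ∧ ∀ x, ‖φ x‖ ≤ 1}) ↦ ENNReal.ofReal (∫ x in Ω, f x * divergence φ x))
    φ ⟨h1, h2, h3, h4⟩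

lemma divergence_eq_zero_of_notMem_tsupport {x : Ed d} (hx : x ∉ tsupport φ) :
    divergence φ x = 0 := by
  simp [divergence, fderiv_of_notMem_tsupport (𝕜 := ℝ) hx]

lemma setIntegral_mul_divergence_congr (hΩ : MeasurableSet Ω) (hU : U ⊆ Ω)
    (h3 : tsupport φ ⊆ U) :
    ∫ x in U, f x * divergence φ x = ∫ x in Ω, f x * divergence φ x := by
  refine (setIntegral_eq_of_subset_of_forall_sdiff_eq_zero hΩ hU fun x hx ↦ ?_).symm
  rw [divergence_eq_zero_of_notMem_tsupport fun h ↦ hx.2 (h3 h), mul_zero]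

lemma integrableOn_mul_divergence (hf : IntegrableOn f Ω) (h1 : ContDiff ℝ 1 φ)
    (h2 : HasCompactSupport φ) : IntegrableOn (fun x ↦ f x * divergence φ x) Ω := by
  have hc : Continuous (divergence φ) := by
    have := h1.continuous_fderiv one_ne_zero
    unfold divergence
    fun_prop
  obtain ⟨B, hB⟩ : ∃ B, ∀ x, ‖divergence φ x‖ ≤ B :=
    hc.bounded_above_of_compact_support
      (HasCompactSupport.intro h2 fun x hx ↦ divergence_eq_zero_of_notMem_tsupport hx)
  exact hf.mul_bdd hc.aestronglyMeasurable (Eventually.of_forall hB)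

lemma var_mono (hΩ : MeasurableSet Ω) (hU : U ⊆ Ω) : var U f ≤ var Ω f := by
  refine iSup₂_le fun φ ⟨h1, h2, h3, h4⟩ ↦ ?_
  rw [setIntegral_mul_divergence_congr hΩ hU h3]
  exact ofReal_integral_le_var h1 h2 (h3.trans hU) h4

lemma var_add_var_le (hU : IsOpen U) (hV : IsOpen V) (hUV : Disjoint U V)
    (hf : IntegrableOn f (U ∪ V)) : var U f + var V f ≤ var (U ∪ V) f := by
  have hm : MeasurableSet (U ∪ V) := (hU.union hV).measurableSet
  have h0 : ∀ W : Set (Ed d), ∃ φ, φ ∈ {φ : Ed d → Ed d | ContDiff ℝ 1 φ ∧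
      HasCompactSupport φ ∧ tsupport φ ⊆ W ∧ ∀ x, ‖φ x‖ ≤ 1} := fun W ↦
    ⟨fun _ ↦ 0, contDiff_const, HasCompactSupport.zero, by simp [tsupport], by simp⟩
  refine ENNReal.biSup_add_biSup_le' (h0 U) (h0 V) fun φ hφ ψ hψ ↦ ?_
  obtain ⟨h1, h2, h3, h4⟩ := hφ
  obtain ⟨k1, k2, k3, k4⟩ := hψ
  rcases le_total (∫ x in U, f x * divergence φ x) 0 with hn | hp
  · rw [ENNReal.ofReal_of_nonpos hn, zero_add]
    exact (ofReal_integral_le_var k1 k2 k3 k4).trans (var_mono hm subset_union_right)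
  rcases le_total (∫ x in V, f x * divergence ψ x) 0 with hn' | hp'
  · rw [ENNReal.ofReal_of_nonpos hn', add_zero]
    exact (ofReal_integral_le_var h1 h2 h3 h4).trans (var_mono hm subset_union_left)
  rw [← ENNReal.ofReal_add hp hp', setIntegral_mul_divergence_congr hm subset_union_left h3,
    setIntegral_mul_divergence_congr hm subset_union_right k3,
    ← integral_add (integrableOn_mul_divergence hf h1 h2) (integrableOn_mul_divergence hf k1 k2)]
  simp_rw [← mul_add]
  simp_rw [← fun x ↦ divergence_add (h1.differentiable one_ne_zero)
    (k1.differentiable one_ne_zero) x]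
  refine ofReal_integral_le_var (h1.add k1) (h2.add k2)
    ((tsupport_add φ ψ).trans (union_subset_union h3 k3)) fun x ↦ ?_
  by_cases hx : x ∈ U
  · have : ψ x = 0 := image_eq_zero_of_notMem_tsupport fun h ↦ hUV.notMem_of_mem_left hx (k3 h)
    simpa [this] using h4 x
  · have : φ x = 0 := image_eq_zero_of_notMem_tsupport fun h ↦ hx (h3 h)
    simpa [this] using k4 x

lemma sum_var_le {ι : Type*} (s : Finset ι) {W : ι → Set (Ed d)} (hW : ∀ i, IsOpen (W i))
    (hd : Pairwise (Function.onFun Disjoint W)) (hΩ : MeasurableSet Ω) (hWΩ : ∀ i, W i ⊆ Ω)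
    (hf : IntegrableOn f Ω) : ∑ i ∈ s, var (W i) f ≤ var Ω f := by
  classical
  suffices h : ∑ i ∈ s, var (W i) f ≤ var (⋃ i ∈ s, W i) f from
    h.trans (var_mono hΩ (iUnion₂_subset fun i _ ↦ hWΩ i))
  induction s using Finset.induction_on with
  | empty => simp
  | insert a s ha ih =>
    rw [Finset.sum_insert ha, Finset.set_biUnion_insert]
    refine (add_le_add_right ih _).trans (var_add_var_le (hW a)
      (isOpen_biUnion fun i _ ↦ hW i) ?_ (hf.mono_set
        (union_subset (hWΩ a) (iUnion₂_subset fun i _ ↦ hWΩ i))))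
    exact disjoint_iUnion₂_right.2 fun i hi ↦ hd fun h ↦ ha (h ▸ hi)

lemma tsum_var_le {ι : Type*} {W : ι → Set (Ed d)} (hW : ∀ i, IsOpen (W i))
    (hd : Pairwise (Function.onFun Disjoint W)) (hΩ : MeasurableSet Ω) (hWΩ : ∀ i, W i ⊆ Ω)
    (hf : IntegrableOn f Ω) : ∑' i, var (W i) f ≤ var Ω f := by
  rw [ENNReal.tsum_eq_iSup_sum]
  exact iSup_le fun s ↦ sum_var_le s hW hd hΩ hWΩ hf

end Variation

/-! ### Comparison of integrals over translated sets -/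

/-- The vector field obtained by averaging a bump function along the segment from `0` to `v`. -/
lemma exists_translation_field {d : ℕ} {U W : Set (Ed d)} {v : Ed d} (hv : v ≠ 0)
    (hW : Convex ℝ W) (hUW : U ⊆ W) (hvW : ∀ x ∈ U, x + v ∈ W) {ψ : Ed d → ℝ}
    (hψ : ContDiff ℝ 1 ψ) (hc : HasCompactSupport ψ) (hs : tsupport ψ ⊆ U)
    (h0 : ∀ x, 0 ≤ ψ x) (h1 : ∀ x, ψ x ≤ 1) :
    ∃ φ : Ed d → Ed d, ContDiff ℝ 1 φ ∧ HasCompactSupport φ ∧ tsupport φ ⊆ W ∧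
      (∀ x, ‖φ x‖ ≤ 1) ∧ ∀ x, divergence φ x = ‖v‖⁻¹ * (ψ x - ψ (x - v)) := by
  obtain ⟨hw, hwv⟩ := contDiff_integral_translate hψ hc v
  set w : Ed d → ℝ := fun x ↦ ∫ t in (0:ℝ)..1, ψ (x - t • v) with hw_def
  set S : Set (Ed d) := (fun p : Ed d × ℝ ↦ p.1 + p.2 • v) '' (tsupport ψ ×ˢ Icc (0:ℝ) 1)
  have hS : IsCompact S := (IsCompact.prod hc isCompact_Icc).image (by fun_prop)
  have hzero : ∀ x ∉ S, w x = 0 := by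
    intro x hx
    have : ∀ t ∈ uIcc (0:ℝ) 1, ψ (x - t • v) = 0 := by
      intro t ht
      rw [uIcc_of_le zero_le_one] at ht
      refine image_eq_zero_of_notMem_tsupport fun h ↦ hx ⟨(x - t • v, t), ⟨h, ht⟩, ?_⟩
      simp
    simp only [hw_def]
    rw [intervalIntegral.integral_congr (g := fun _ ↦ (0:ℝ)) this]
    simp
  have hsupp : tsupport (fun x ↦ w x • (‖v‖⁻¹ • v)) ⊆ S :=
    closure_minimal (fun x hx ↦ by
      by_contra h
      exact hx (by simp [hzero x h])) hS.isClosed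
  refine ⟨fun x ↦ w x • (‖v‖⁻¹ • v), hw.smul contDiff_const,
    hS.of_isClosed_subset (isClosed_tsupport _) hsupp, hsupp.trans ?_, fun x ↦ ?_, fun x ↦ ?_⟩
  · rintro _ ⟨⟨y, t⟩, ⟨hy, ht⟩, rfl⟩
    exact hW.add_smul_mem (hUW (hs hy)) (hvW y (hs hy)) ht
  · have hle : ‖w x‖ ≤ 1 * |(1:ℝ) - 0| :=
      intervalIntegral.norm_integral_le_of_norm_le_const fun t _ ↦ by
        rw [Real.norm_of_nonneg (h0 _)]; exact h1 _
    have hn : ‖v‖ ≠ 0 := norm_ne_zero_iff.2 hv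
    rw [norm_smul, norm_smul, norm_inv, norm_norm, inv_mul_cancel₀ hn]
    simpa using hle
  · rw [divergence_smul_const (hw.differentiable one_ne_zero), map_smul, hwv, smul_eq_mul]

lemma setLIntegral_compact_le_add_var {d : ℕ} {K U V W : Set (Ed d)} {v : Ed d} {f : Ed d → ℝ}
    (hK : IsCompact K) (hKU : K ⊆ U) (hU : IsOpen U) (hV : MeasurableSet V) (hW : Convex ℝ W)
    (hUW : U ⊆ W) (hVW : V ⊆ W) (hUV : ∀ x ∈ U, x + v ∈ V) (hf : IntegrableOn f W)
    (hf0 : ∀ x, 0 ≤ f x) :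
    ∫⁻ x in K, ENNReal.ofReal (f x) ≤
      (∫⁻ x in V, ENNReal.ofReal (f x)) + ENNReal.ofReal ‖v‖ * var W f := by
  rcases eq_or_ne v 0 with rfl | hv
  · exact (lintegral_mono_set fun x hx ↦ by simpa using hUV x (hKU hx)).trans le_self_add
  obtain ⟨ψ, hψ, hc, hs, h0, h1, hK1⟩ := exists_contDiff_bump hK hU hKU
  obtain ⟨φ, hφ, hφc, hφs, hφ1, hφd⟩ := exists_translation_field hv hW hUW
    (fun x hx ↦ hVW (hUV x hx)) hψ hc hs h0 h1
  have hn : 0 < ‖v‖ := norm_pos_iff.2 hv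
  have hi1 : IntegrableOn (fun x ↦ f x * ψ x) W :=
    hf.mul_bdd (c := 1) hψ.continuous.aestronglyMeasurable
      (Eventually.of_forall fun x ↦ by rw [Real.norm_of_nonneg (h0 x)]; exact h1 x)
  have hi2 : IntegrableOn (fun x ↦ f x * ψ (x - v)) W :=
    hf.mul_bdd (c := 1) (hψ.continuous.comp (by fun_prop)).aestronglyMeasurable
      (Eventually.of_forall fun x ↦ by rw [Real.norm_of_nonneg (h0 _)]; exact h1 _)
  have hvar : ENNReal.ofReal ((∫ x in W, f x * ψ x) - ∫ x in W, f x * ψ (x - v)) ≤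
      ENNReal.ofReal ‖v‖ * var W f := by
    have h := ofReal_integral_le_var (f := f) hφ hφc hφs hφ1
    have heq : ∫ x in W, f x * divergence φ x =
        ‖v‖⁻¹ * ((∫ x in W, f x * ψ x) - ∫ x in W, f x * ψ (x - v)) := by
      rw [← integral_sub hi1 hi2, ← integral_const_mul]
      congr 1 with x
      rw [hφd]; ring
    calc _ = ENNReal.ofReal ‖v‖ * ENNReal.ofReal (∫ x in W, f x * divergence φ x) := by
          rw [← ENNReal.ofReal_mul hn.le, heq, mul_inv_cancel_left₀ hn.ne']
      _ ≤ _ := by gcongr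
  calc ∫⁻ x in K, ENNReal.ofReal (f x)
      = ∫⁻ x in K, ENNReal.ofReal (f x * ψ x) :=
        setLIntegral_congr_fun hK.measurableSet fun x hx ↦ by simp [hK1 x hx]
    _ ≤ ∫⁻ x in W, ENNReal.ofReal (f x * ψ x) := lintegral_mono_set (hKU.trans hUW)
    _ = ENNReal.ofReal (∫ x in W, f x * ψ x) :=
        (ofReal_integral_eq_lintegral_ofReal hi1
          (Eventually.of_forall fun x ↦ mul_nonneg (hf0 x) (h0 x))).symm
    _ ≤ ENNReal.ofReal (∫ x in W, f x * ψ (x - v)) +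
          ENNReal.ofReal ((∫ x in W, f x * ψ x) - ∫ x in W, f x * ψ (x - v)) := by
        refine le_trans (le_of_eq ?_) ENNReal.ofReal_add_le
        rw [add_sub_cancel]
    _ ≤ (∫⁻ x in V, ENNReal.ofReal (f x)) + ENNReal.ofReal ‖v‖ * var W f := by
        refine add_le_add ?_ hvar
        rw [ofReal_integral_eq_lintegral_ofReal hi2
          (Eventually.of_forall fun x ↦ mul_nonneg (hf0 x) (h0 _)), ← lintegral_indicator hV]
        refine (setLIntegral_le_lintegral _ _).trans (lintegral_mono fun x ↦ ?_)
        by_cases hx : x ∈ V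
        · rw [indicator_of_mem hx]
          exact ENNReal.ofReal_le_ofReal (mul_le_of_le_one_right (hf0 x) (h1 _))
        · have : ψ (x - v) = 0 := image_eq_zero_of_notMem_tsupport fun h ↦
            hx (by simpa using hUV _ (hs h))
          simp [this]

lemma setLIntegral_le_add_var {d : ℕ} {U V W : Set (Ed d)} {v : Ed d} {f : Ed d → ℝ}
    (hU : IsOpen U) (hV : MeasurableSet V) (hW : Convex ℝ W)
    (hUW : U ⊆ W) (hVW : V ⊆ W) (hUV : ∀ x ∈ U, x + v ∈ V) (hf : IntegrableOn f W)
    (hf0 : ∀ x, 0 ≤ f x) :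
    ∫⁻ x in U, ENNReal.ofReal (f x) ≤
      (∫⁻ x in V, ENNReal.ofReal (f x)) + ENNReal.ofReal ‖v‖ * var W f := by
  have hfin := isFiniteMeasure_withDensity_ofReal (hf.mono_set hUW).2
  have happ : ∀ A ⊆ U, MeasurableSet A →
      (volume.restrict U).withDensity (fun x ↦ ENNReal.ofReal (f x)) A =
        ∫⁻ x in A, ENNReal.ofReal (f x) := by
    intro A hA hAm
    rw [withDensity_apply _ hAm, Measure.restrict_restrict hAm, inter_eq_left.2 hA]
  rw [← happ U subset_rfl hU.measurableSet, hU.measure_eq_iSup_isCompact]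
  refine iSup₂_le fun K hKU ↦ iSup_le fun hK ↦ ?_
  rw [happ K hKU hK.measurableSet]
  exact setLIntegral_compact_le_add_var hK hKU hU hV hW hUW hVW hUV hf hf0

/-! ### Dyadic cubes -/

/-- The index of the dyadic cube of side length `2 ^ k` containing `x`. -/
def dyadicIndex {d : ℕ} (k : ℤ) (x : Ed d) : Fin d → ℤ := fun i ↦ ⌊x i / (2:ℝ) ^ k⌋

/-- The dyadic cube of side length `2 ^ k` with index `m`. -/
def dyadicCube {d : ℕ} (k : ℤ) (m : Fin d → ℤ) : Set (Ed d) := {x | dyadicIndex k x = m}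

/-- The number `2 ^ k` as an extended nonnegative real. -/
def dyadicSide (k : ℤ) : ℝ≥0∞ := ENNReal.ofReal ((2:ℝ) ^ k)

section Dyadic

variable {d : ℕ}

lemma dyadicCube_eq (k : ℤ) (m : Fin d → ℤ) :
    dyadicCube k m = {x : Ed d | ∀ i, x i ∈ Ico ((2:ℝ) ^ k * m i) ((2:ℝ) ^ k * (m i + 1))} := by
  have h2 : (0:ℝ) < 2 ^ k := by positivity
  ext x
  simp only [dyadicCube, dyadicIndex, mem_ofPred_eq, funext_iff, Int.floor_eq_iff, mem_Ico,
    le_div_iff₀ h2, div_lt_iff₀ h2, mul_comm]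

lemma isDyadicCube_iff {Q : Set (Ed d)} : IsDyadicCube Q ↔ ∃ k m, Q = dyadicCube k m := by
  simp only [IsDyadicCube, dyadicCube_eq]

lemma measurable_dyadicIndex (k : ℤ) : Measurable (dyadicIndex k : Ed d → Fin d → ℤ) := by
  refine measurable_pi_lambda _ fun i ↦ Int.measurable_floor.comp ?_
  fun_prop

lemma measurableSet_dyadicCube (k : ℤ) (m : Fin d → ℤ) : MeasurableSet (dyadicCube k m) :=
  measurable_dyadicIndex k (measurableSet_singleton m)

lemma convex_dyadicCube (k : ℤ) (m : Fin d → ℤ) : Convex ℝ (dyadicCube k m) := by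
  rw [dyadicCube_eq]
  intro x hx y hy a b ha hb hab i
  exact convex_Ico _ _ (hx i) (hy i) ha hb hab

lemma disjoint_dyadicCube (k : ℤ) {m m' : Fin d → ℤ} (h : m ≠ m') :
    Disjoint (dyadicCube k m) (dyadicCube k m') :=
  Set.disjoint_left.2 fun _ hx hx' ↦ h (hx.symm.trans hx')

lemma volume_dyadicCube (k : ℤ) (m : Fin d → ℤ) : volume (dyadicCube k m) = dyadicSide k ^ d := by
  have h : dyadicCube k m = (WithLp.ofLp : Ed d → Fin d → ℝ) ⁻¹'
      (univ.pi fun i ↦ Ico ((2:ℝ) ^ k * m i) ((2:ℝ) ^ k * (m i + 1))) := by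
    rw [dyadicCube_eq]; ext x; simp
  rw [h, (PiLp.volume_preserving_ofLp (Fin d)).measure_preimage
    (MeasurableSet.univ_pi fun _ ↦ measurableSet_Ico).nullMeasurableSet, Real.volume_pi_Ico]
  simp [dyadicSide, mul_add]

lemma dyadicSide_ne_zero (k : ℤ) : dyadicSide k ≠ 0 := by
  have h2 : (0:ℝ) < 2 ^ k := by positivity
  simpa [dyadicSide] using h2

lemma dyadicSide_ne_top (k : ℤ) : dyadicSide k ≠ ∞ := ENNReal.ofReal_ne_top

lemma dyadicSide_add_one (k : ℤ) : dyadicSide (k + 1) = 2 * dyadicSide k := by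
  rw [dyadicSide, dyadicSide, zpow_add_one₀ two_ne_zero, mul_comm,
    ENNReal.ofReal_mul zero_le_two, ENNReal.ofReal_ofNat]

lemma tsum_dyadicSide (n : ℤ) : ∑' i : ℕ, dyadicSide (n - (i + 1)) = dyadicSide n := by
  have h : ∀ i : ℕ, dyadicSide (n - (i + 1)) = dyadicSide n * 2⁻¹ ^ (i + 1) := by
    intro i
    have h2 : (2:ℝ) ^ (n - (i + 1)) = 2 ^ n * 2⁻¹ ^ (i + 1) := by
      rw [zpow_sub₀ two_ne_zero, div_eq_mul_inv, inv_pow]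
      norm_cast
    rw [dyadicSide, h2, ENNReal.ofReal_mul (by positivity), ENNReal.ofReal_pow (by positivity),
      ENNReal.ofReal_inv_of_pos two_pos, ENNReal.ofReal_ofNat, dyadicSide]
  simp_rw [h]
  rw [ENNReal.tsum_mul_left, ENNReal.tsum_geometric_add_one, ENNReal.one_sub_inv_two, inv_inv,
    ENNReal.inv_mul_cancel two_ne_zero ENNReal.ofNat_ne_top, mul_one]

lemma dyadicIndex_add_one (k : ℤ) (x : Ed d) (i : Fin d) :
    dyadicIndex (k + 1) x i = dyadicIndex k x i / 2 := by
  have h := Int.floor_div_natCast (x i / (2:ℝ) ^ k) 2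
  simp only [dyadicIndex]
  rw [zpow_add_one₀ two_ne_zero, ← div_div]
  exact_mod_cast h

lemma dyadicCube_dyadicIndex_mono (x : Ed d) (n : ℤ) (j : ℕ) :
    dyadicCube (n - j) (dyadicIndex (n - j) x) ⊆ dyadicCube n (dyadicIndex n x) := by
  induction j with
  | zero => simp
  | succ j ih =>
    refine Subset.trans (fun y hy ↦ ?_) ih
    have e : n - (j : ℤ) = (n - ((j + 1 : ℕ) : ℤ)) + 1 := by push_cast; ring
    funext i
    rw [e, dyadicIndex_add_one, dyadicIndex_add_one, show dyadicIndex _ y = _ from hy]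

lemma scale_le_of_dyadicCube_subset (hd : 1 ≤ d) {k n : ℤ} {m p : Fin d → ℤ}
    (h : dyadicCube k m ⊆ dyadicCube n p) : k ≤ n := by
  have h1 := measure_mono (μ := volume) h
  rw [volume_dyadicCube, volume_dyadicCube, ENNReal.pow_le_pow_left_iff (by omega), dyadicSide,
    dyadicSide, ENNReal.ofReal_le_ofReal_iff (by positivity)] at h1
  exact (zpow_le_zpow_iff_right₀ one_lt_two).1 h1

lemma setLIntegral_interior_dyadicCube (k : ℤ) (m : Fin d → ℤ) (g : Ed d → ℝ≥0∞) :
    ∫⁻ x in interior (dyadicCube k m), g x = ∫⁻ x in dyadicCube k m, g x :=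
  setLIntegral_congr (interior_ae_eq_of_null_frontier
    ((convex_dyadicCube k m).addHaar_frontier volume))

lemma dyadicIndex_add (k : ℤ) (x : Ed d) (q : Fin d → ℤ) :
    dyadicIndex k (x + WithLp.toLp 2 fun i ↦ (2:ℝ) ^ k * q i) = dyadicIndex k x + q := by
  have h2 : (2:ℝ) ^ k ≠ 0 := by positivity
  funext i
  simp [dyadicIndex, add_div, mul_div_cancel_left₀ _ h2]

lemma add_mem_interior_dyadicCube {k : ℤ} {p q : Fin d → ℤ} {x : Ed d}
    (hx : x ∈ interior (dyadicCube k p)) :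
    x + WithLp.toLp 2 (fun i ↦ (2:ℝ) ^ k * (q - p) i) ∈ interior (dyadicCube k q) := by
  set v : Ed d := WithLp.toLp 2 (fun i ↦ (2:ℝ) ^ k * (q - p) i)
  have hsub : dyadicCube k p ⊆ (Homeomorph.addRight v) ⁻¹' dyadicCube k q := by
    intro y hy
    have := dyadicIndex_add k y (q - p)
    rw [show dyadicIndex k y = p from hy, add_sub_cancel] at this
    exact this
  have h := interior_mono hsub hx
  rw [← Homeomorph.preimage_interior] at h
  exact h

lemma norm_toLp_le {k : ℤ} {q : Fin d → ℤ} (hq : ∀ i, |q i| ≤ 1) :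
    ‖(WithLp.toLp 2 (fun i ↦ (2:ℝ) ^ k * q i) : Ed d)‖ ≤ d * 2 ^ k := by
  have h2 : (0:ℝ) < 2 ^ k := by positivity
  have e : (WithLp.toLp 2 (fun i ↦ (2:ℝ) ^ k * q i) : Ed d) =
      ∑ i, EuclideanSpace.single i ((2:ℝ) ^ k * q i) := by
    ext j; simp [Finset.sum_apply, Pi.single_apply]
  rw [e]
  refine (norm_sum_le _ _).trans ((Finset.sum_le_card_nsmul _ _ (2 ^ k) fun i _ ↦ ?_).trans_eq
    (by simp))
  rw [PiLp.norm_single, norm_mul, Real.norm_of_nonneg h2.le, Real.norm_eq_abs]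
  exact mul_le_of_le_one_right h2.le (by exact_mod_cast hq i)

/-- The mass of `f` on a child is controlled by the mass on its parent and the variation. -/
lemma setLIntegral_child_le {k : ℤ} {m p : Fin d → ℤ} (hp : ∀ i, p i / 2 = m i) {f : Ed d → ℝ}
    (hf : IntegrableOn f (dyadicCube (k + 1) m)) (hf0 : ∀ x, 0 ≤ f x) :
    2 ^ d * ∫⁻ x in dyadicCube k p, ENNReal.ofReal (f x) ≤
      (∫⁻ x in dyadicCube (k + 1) m, ENNReal.ofReal (f x)) +
        2 ^ d * (d * dyadicSide k * var (interior (dyadicCube (k + 1) m)) f) := by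
  have hsub : ∀ q : Fin d → ℤ, (∀ i, q i / 2 = m i) →
      dyadicCube k q ⊆ dyadicCube (k + 1) m := by
    intro q hq x hx
    funext i
    rw [dyadicIndex_add_one, show dyadicIndex k x = q from hx, hq]
  let q : (Fin d → Fin 2) → Fin d → ℤ := fun ε i ↦ 2 * m i + (ε i : ℕ)
  have hq : ∀ ε i, q ε i / 2 = m i := fun ε i ↦ by
    have := (ε i).isLt
    simp only [q]; omega
  have hinj : Function.Injective q := by
    intro ε ε' h
    funext i
    have := congrFun h i
    simp only [q] at this
    exact Fin.ext (by omega)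
  have hcomp : ∀ ε, ∫⁻ x in dyadicCube k p, ENNReal.ofReal (f x) ≤
      (∫⁻ x in dyadicCube k (q ε), ENNReal.ofReal (f x)) +
        d * dyadicSide k * var (interior (dyadicCube (k + 1) m)) f := by
    intro ε
    rw [← setLIntegral_interior_dyadicCube k p, ← setLIntegral_interior_dyadicCube k (q ε)]
    refine (setLIntegral_le_add_var (v := WithLp.toLp 2 (fun i ↦ (2:ℝ) ^ k * (q ε - p) i))
      isOpen_interior isOpen_interior.measurableSet (convex_dyadicCube (k + 1) m).interior
      (interior_mono (hsub p hp)) (interior_mono (hsub _ (hq ε)))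
      (fun x hx ↦ add_mem_interior_dyadicCube hx) (hf.mono_set interior_subset) hf0).trans ?_
    gcongr
    refine (ENNReal.ofReal_le_ofReal (norm_toLp_le fun i ↦ ?_)).trans_eq ?_
    · have h1 := hq ε i
      have h2 := hp i
      rw [Pi.sub_apply, abs_le]
      omega
    · rw [ENNReal.ofReal_mul (by positivity), ENNReal.ofReal_natCast, dyadicSide]
  have hsum := Finset.sum_le_sum fun ε (_ : ε ∈ Finset.univ) ↦ hcomp ε
  rw [Finset.sum_add_distrib, Finset.sum_const, Finset.sum_const, Finset.card_univ,
    Fintype.card_pi_const, Fintype.card_fin, nsmul_eq_mul, nsmul_eq_mul] at hsum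
  push_cast at hsum
  refine hsum.trans (add_le_add_left ?_ _)
  rw [← lintegral_biUnion_finset (fun ε _ ε' _ h ↦ disjoint_dyadicCube k (hinj.ne h))
    (fun ε _ ↦ measurableSet_dyadicCube k (q ε))]
  exact lintegral_mono_set (iUnion₂_subset fun ε _ ↦ hsub _ (hq ε))

/-- The average of `f` over a dyadic cube. -/
def dyadicAverage (f : Ed d → ℝ) (k : ℤ) (m : Fin d → ℤ) : ℝ≥0∞ :=
  (∫⁻ x in dyadicCube k m, ENNReal.ofReal (f x)) / dyadicSide k ^ d

lemma dyadicAverage_child_le {k : ℤ} {m p : Fin d → ℤ} (hp : ∀ i, p i / 2 = m i) {f : Ed d → ℝ}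
    (hf : IntegrableOn f (dyadicCube (k + 1) m)) (hf0 : ∀ x, 0 ≤ f x) :
    dyadicAverage f k p ≤ dyadicAverage f (k + 1) m +
      d * dyadicSide k * var (interior (dyadicCube (k + 1) m)) f / dyadicSide k ^ d := by
  have h0 : (2:ℝ≥0∞) ^ d ≠ 0 := pow_ne_zero _ two_ne_zero
  have ht : (2:ℝ≥0∞) ^ d ≠ ∞ := ENNReal.pow_ne_top ENNReal.ofNat_ne_top
  rw [dyadicAverage, dyadicAverage, ← ENNReal.mul_div_mul_left _ (dyadicSide k ^ d) h0 ht,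
    ← ENNReal.mul_div_mul_left (d * dyadicSide k * _) (dyadicSide k ^ d) h0 ht,
    dyadicSide_add_one, mul_pow, ← ENNReal.add_div]
  exact ENNReal.div_le_div_right (setLIntegral_child_le hp hf hf0) _

/-- The bound for the jump of the dyadic averages at `x` from scale `k + 1` to scale `k`. -/
def dyadicJump (f : Ed d → ℝ) (k : ℤ) (x : Ed d) : ℝ≥0∞ :=
  d * dyadicSide k * var (interior (dyadicCube (k + 1) (dyadicIndex (k + 1) x))) f /
    dyadicSide k ^ d

lemma measurable_dyadicJump (f : Ed d → ℝ) (k : ℤ) : Measurable (dyadicJump f k) :=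
  (measurable_of_countable fun m : Fin d → ℤ ↦ d * dyadicSide k *
    var (interior (dyadicCube (k + 1) m)) f / dyadicSide k ^ d).comp (measurable_dyadicIndex (k + 1))

lemma dyadicAverage_le_add_sum {f : Ed d → ℝ} {n : ℤ} {x : Ed d}
    (hf : IntegrableOn f (dyadicCube n (dyadicIndex n x))) (hf0 : ∀ x, 0 ≤ f x) (j : ℕ) :
    dyadicAverage f (n - j) (dyadicIndex (n - j) x) ≤ dyadicAverage f n (dyadicIndex n x) +
      ∑ i ∈ Finset.range j, dyadicJump f (n - (i + 1)) x := by
  induction j with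
  | zero => simp
  | succ j ih =>
    have e : n - ((j : ℤ) + 1) + 1 = n - j := by ring
    rw [Finset.sum_range_succ, ← add_assoc]
    push_cast
    refine (dyadicAverage_child_le (m := dyadicIndex (n - (j + 1) + 1) x)
      (fun i ↦ (dyadicIndex_add_one _ x i).symm) ?_ hf0).trans (add_le_add_left ?_ _)
    · rw [e]; exact hf.mono_set (dyadicCube_dyadicIndex_mono x n j)
    · rw [e]; exact ih

lemma setLIntegral_dyadicJump_le {f : Ed d → ℝ} {n : ℤ} {p : Fin d → ℤ}
    (hf : IntegrableOn f (dyadicCube n p)) (i : ℕ) :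
    ∫⁻ x in dyadicCube n p, dyadicJump f (n - (i + 1)) x ≤
      2 ^ d * d * var (interior (dyadicCube n p)) f * dyadicSide (n - (i + 1)) := by
  set k : ℤ := n - (i + 1) with hk
  have e : k + 1 = n - i := by rw [hk]; ring
  let I := {m : Fin d → ℤ // dyadicCube (k + 1) m ⊆ dyadicCube n p}
  have hcover : dyadicCube n p ⊆ ⋃ m : I, dyadicCube (k + 1) m.1 := by
    intro x hx
    have hx' : dyadicIndex n x = p := hx
    refine mem_iUnion.2 ⟨⟨dyadicIndex (k + 1) x, ?_⟩, rfl⟩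
    rw [e, ← hx']
    exact dyadicCube_dyadicIndex_mono x n i
  have hs0 : dyadicSide k ^ d ≠ 0 := pow_ne_zero _ (dyadicSide_ne_zero k)
  have hst : dyadicSide k ^ d ≠ ∞ := ENNReal.pow_ne_top (dyadicSide_ne_top k)
  calc ∫⁻ x in dyadicCube n p, dyadicJump f k x
      ≤ ∑' m : I, ∫⁻ x in dyadicCube (k + 1) m.1, dyadicJump f k x :=
        (lintegral_mono_set hcover).trans (lintegral_iUnion_le _ _)
    _ = ∑' m : I, 2 ^ d * d * dyadicSide k * var (interior (dyadicCube (k + 1) m.1)) f := by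
        congr 1 with m
        rw [setLIntegral_congr_fun (g := fun _ ↦ d * dyadicSide k *
          var (interior (dyadicCube (k + 1) m.1)) f / dyadicSide k ^ d)
          (measurableSet_dyadicCube _ _) (fun x hx ↦ by
            rw [dyadicJump, show dyadicIndex (k + 1) x = m.1 from hx]), setLIntegral_const,
          volume_dyadicCube, dyadicSide_add_one, mul_pow, mul_comm (2 ^ d), ← mul_assoc,
          ENNReal.div_mul_cancel hs0 hst]
        ring
    _ = 2 ^ d * d * dyadicSide k * ∑' m : I, var (interior (dyadicCube (k + 1) m.1)) f :=
        ENNReal.tsum_mul_left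
    _ ≤ 2 ^ d * d * dyadicSide k * var (interior (dyadicCube n p)) f := by
        gcongr
        exact tsum_var_le (fun _ ↦ isOpen_interior)
          (fun m m' h ↦ (disjoint_dyadicCube (k + 1) (Subtype.coe_ne_coe.2 h)).mono
            interior_subset interior_subset) isOpen_interior.measurableSet
          (fun m ↦ interior_mono m.2) (hf.mono_set interior_subset)
    _ = _ := by ring

lemma ofReal_sSup_le {S : Set ℝ} {B : ℝ≥0∞} (h : ∀ y ∈ S, ENNReal.ofReal y ≤ B) :
    ENNReal.ofReal (sSup S) ≤ B := by
  rcases eq_or_ne B ∞ with rfl | hB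
  · exact le_top
  · exact ENNReal.ofReal_le_of_le_toReal (Real.sSup_le
      (fun y hy ↦ (ENNReal.ofReal_le_iff_le_toReal hB).1 (h y hy)) ENNReal.toReal_nonneg)

lemma ofReal_dyadicMaxFunIn_le (hd : 1 ≤ d) {f : Ed d → ℝ} {n : ℤ} {p : Fin d → ℤ}
    (hf : IntegrableOn f (dyadicCube n p)) (hf0 : ∀ x, 0 ≤ f x) {x : Ed d}
    (hx : x ∈ dyadicCube n p) :
    ENNReal.ofReal (dyadicMaxFunIn (dyadicCube n p) f x) ≤
      dyadicAverage f n p + ∑' i : ℕ, dyadicJump f (n - (i + 1)) x := by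
  have hxp : dyadicIndex n x = p := hx
  refine ofReal_sSup_le ?_
  rintro y ⟨P, hP, hxP, hPQ, rfl⟩
  obtain ⟨k, m, rfl⟩ := isDyadicCube_iff.1 hP
  obtain ⟨j, hj⟩ := Int.le.dest (scale_le_of_dyadicCube_subset hd hPQ)
  obtain rfl : k = n - j := by omega
  obtain rfl : dyadicIndex (n - j) x = m := hxP
  rw [ofReal_setAverage (hf.mono_set hPQ) (Eventually.of_forall hf0), volume_dyadicCube]
  subst hxp
  exact (dyadicAverage_le_add_sum hf hf0 j).trans
    (add_le_add_right (ENNReal.sum_le_tsum _) _)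

end Dyadic

/-- `∫_Q M_Q f ≤ C_d (∫_Q f + |Q|^{1/d} var_{interior Q} f)` for nonnegative `f ∈ L¹(Q)`
with bounded variation on the interior of the dyadic cube `Q`. -/
theorem integral_maxfun_on_cube_bound (d : ℕ) (hd : 1 ≤ d) :
    ∃ C : ℝ≥0∞, C ≠ ∞ ∧
      ∀ (Q : Set (Ed d)), IsDyadicCube Q →
        ∀ f : Ed d → ℝ, IntegrableOn f Q volume → (∀ x, 0 ≤ f x) →
          var (interior Q) f < ∞ →
          ∫⁻ x in Q, ENNReal.ofReal (dyadicMaxFunIn Q f x) ≤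
            C * ((∫⁻ x in Q, ENNReal.ofReal (f x)) +
              volume Q ^ ((1:ℝ) / d) * var (interior Q) f) := by
  refine ⟨1 + 2 ^ d * d, by finiteness, ?_⟩
  intro Q hQ f hf hf0 _
  obtain ⟨n, p, rfl⟩ := isDyadicCube_iff.1 hQ
  have hd0 : (d : ℝ) ≠ 0 := by positivity
  have hs0 : dyadicSide n ^ d ≠ 0 := pow_ne_zero _ (dyadicSide_ne_zero n)
  have hst : dyadicSide n ^ d ≠ ∞ := ENNReal.pow_ne_top (dyadicSide_ne_top n)
  have hside : volume (dyadicCube n p) ^ ((1:ℝ) / d) = dyadicSide n := by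
    rw [volume_dyadicCube, ← ENNReal.rpow_natCast, ← ENNReal.rpow_mul, mul_one_div_cancel hd0,
      ENNReal.rpow_one]
  rw [hside]
  set F := ∫⁻ x in dyadicCube n p, ENNReal.ofReal (f x) with hF
  set v := var (interior (dyadicCube n p)) f
  calc ∫⁻ x in dyadicCube n p, ENNReal.ofReal (dyadicMaxFunIn (dyadicCube n p) f x)
      ≤ ∫⁻ x in dyadicCube n p,
          (dyadicAverage f n p + ∑' i : ℕ, dyadicJump f (n - (i + 1)) x) :=
        setLIntegral_mono' (measurableSet_dyadicCube n p) fun x hx ↦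
          ofReal_dyadicMaxFunIn_le hd hf hf0 hx
    _ = F + ∑' i : ℕ, ∫⁻ x in dyadicCube n p, dyadicJump f (n - (i + 1)) x := by
        rw [lintegral_add_left measurable_const, setLIntegral_const, volume_dyadicCube,
          dyadicAverage, ENNReal.div_mul_cancel hs0 hst,
          lintegral_tsum fun i ↦ (measurable_dyadicJump f _).aemeasurable]
    _ ≤ F + ∑' i : ℕ, 2 ^ d * d * v * dyadicSide (n - (i + 1)) := by
        gcongr with i
        exact setLIntegral_dyadicJump_le hf i
    _ = 1 * F + 2 ^ d * d * (dyadicSide n * v) := by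
        rw [ENNReal.tsum_mul_left, tsum_dyadicSide]; ring
    _ ≤ (1 + 2 ^ d * d) * F + (1 + 2 ^ d * d) * (dyadicSide n * v) := by
        gcongr
        · exact le_self_add
        · exact le_add_self
    _ = (1 + 2 ^ d * d) * (F + dyadicSide n * v) := by ring

end
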